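/- arXiv:1201.6433 — 2 statements merged into one kernel-verified Lean document; each statement's English description precedes it below -/
import Mathlib

section
/- Let h ∈ H^0_{α,ω}(ℝⁿ), n ≥ 2. Then there exists a constant σ (depending on h) with 0 < σ < 1 such that sup_{ξ ≠ 0} |ξ|^{n−σ} h(ξ) < ∞. (This is the statement that F_h embeds continuously into PM^{n−σ}.) -/
open MeasureTheory ENNReal Filter Topology Metric

/-- The convolution `h*h(ξ) = ∫ h(ξ-η) h(η) dη` of an `[0,∞]`-valued function on `ℝⁿ`. -/
noncomputable def selfConv {n : ℕ} (h : EuclideanSpace ℝ (Fin n) → ℝ≥0∞)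
    (ξ : EuclideanSpace ℝ (Fin n)) : ℝ≥0∞ :=
  ∫⁻ η, h (ξ - η) * h η

/-- `h` is a majorizing kernel with exponent `θ` on `ℝⁿ`. -/
def IsMajorizingKernel {n : ℕ} (θ : ℝ) (h : EuclideanSpace ℝ (Fin n) → ℝ≥0∞) : Prop :=
  Measurable h ∧ (∀ ξ, 0 < h ξ) ∧
  (∃ B : ℝ, 0 < B ∧ ∀ ξ, selfConv h ξ ≤ ENNReal.ofReal (B * ‖ξ‖ ^ θ) * h ξ) ∧
  volume {ξ : EuclideanSpace ℝ (Fin n) | h ξ = ∞} = 0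

/-- `h` behaves algebraically at the origin as `|ξ|^{-α}`. -/
def BehavesAtOrigin {n : ℕ} (α : ℝ) (h : EuclideanSpace ℝ (Fin n) → ℝ≥0∞) : Prop :=
  ∃ R C₁ C₂ : ℝ, 0 < R ∧ 0 < C₁ ∧ 0 < C₂ ∧
    ∀ ξ : EuclideanSpace ℝ (Fin n), 0 < ‖ξ‖ → ‖ξ‖ < R →
      ENNReal.ofReal (C₁ * ‖ξ‖ ^ (-α)) ≤ h ξ ∧ h ξ ≤ ENNReal.ofReal (C₂ * ‖ξ‖ ^ (-α))

/-- `h` behaves algebraically at infinity as `|ξ|^{-ω}`. -/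
def BehavesAtInfinity {n : ℕ} (ω : ℝ) (h : EuclideanSpace ℝ (Fin n) → ℝ≥0∞) : Prop :=
  ∃ R C₁ C₂ : ℝ, 0 < R ∧ 0 < C₁ ∧ 0 < C₂ ∧
    ∀ ξ : EuclideanSpace ℝ (Fin n), R < ‖ξ‖ →
      ENNReal.ofReal (C₁ * ‖ξ‖ ^ (-ω)) ≤ h ξ ∧ h ξ ≤ ENNReal.ofReal (C₂ * ‖ξ‖ ^ (-ω))

/-- `h ∈ H^θ_{α,ω}(ℝⁿ)`: a majorizing kernel of exponent `θ` with radial algebraic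
growth and decay: it behaves as `|ξ|^{-α}` at the origin (`α ≥ 0`), as `|ξ|^{-ω}` at
infinity (`ω > 0`), and is bounded on the complement of every neighborhood of the
origin. -/
def IsRadialAlgebraicKernel {n : ℕ} (θ α ω : ℝ) (h : EuclideanSpace ℝ (Fin n) → ℝ≥0∞) :
    Prop :=
  IsMajorizingKernel θ h ∧ 0 ≤ α ∧ BehavesAtOrigin α h ∧ 0 < ω ∧ BehavesAtInfinity ω h ∧
    ∀ ε : ℝ, 0 < ε → ∃ M : ℝ, ∀ ξ : EuclideanSpace ℝ (Fin n), ε ≤ ‖ξ‖ →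
      h ξ ≤ ENNReal.ofReal M

/-!
Test the kernel inequality `h*h ≤ B |ξ|^θ h` at a point with `|ξ| = 2k`. For `|η| < k` the factor
`h(ξ-η)` is comparable to `h(ξ)`, both being of order `k^{-ω}`, so dividing by it leaves
`∫_{|η|<k} h ≤ K k^θ`. If `θ = 0` then `h` is integrable, and the asymptotics of `h` force
`α < n < ω`. Hence `|ξ|^γ h(ξ)` is bounded for every `γ ∈ [α, ω]`, in particular for `γ = n - σ`
with `σ > 0` small.
-/

section Radial

variable {E F : Type*} [NormedAddCommGroup E] [NormedSpace ℝ E] [Nontrivial E]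
  [FiniteDimensional ℝ E] [MeasurableSpace E] [BorelSpace E]
  [NormedAddCommGroup F] [NormedSpace ℝ F] (μ : Measure E) [μ.IsAddHaarMeasure]

lemma integrableOn_norm_preimage_iff {f : ℝ → F} {S : Set ℝ} (hS : MeasurableSet S)
    (hS₀ : S ⊆ Set.Ioi 0) :
    IntegrableOn (fun x : E => f ‖x‖) (norm ⁻¹' S) μ ↔
      IntegrableOn (fun y : ℝ => y ^ (Module.finrank ℝ E - 1) • f y) S := by
  have h_indicator : (norm ⁻¹' S).indicator (fun x : E => f ‖x‖) = fun x => S.indicator f ‖x‖ :=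
    rfl
  rw [← integrable_indicator_iff (measurable_norm hS), h_indicator,
    integrable_fun_norm_addHaar, ← Set.indicator_smul, integrableOn_indicator_iff hS,
    Set.inter_eq_left.mpr hS₀]

lemma integrableOn_norm_rpow_preimage_iff {s : ℝ} {S : Set ℝ} (hS : MeasurableSet S)
    (hS₀ : S ⊆ Set.Ioi 0) :
    IntegrableOn (fun x : E => ‖x‖ ^ s) (norm ⁻¹' S) μ ↔
      IntegrableOn (fun y : ℝ => y ^ ((Module.finrank ℝ E : ℝ) - 1 + s)) S := by
  rw [integrableOn_norm_preimage_iff μ (f := (· ^ s)) hS hS₀]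
  refine integrableOn_congr_fun (fun y hy => ?_) hS
  have hy₀ : 0 < y := hS₀ hy
  rw [smul_eq_mul, ← Real.rpow_natCast, Nat.cast_pred Module.finrank_pos, Real.rpow_add hy₀]

lemma integrableOn_norm_rpow_punctured_ball_iff {s r : ℝ} (hr : 0 < r) :
    IntegrableOn (fun x : E => ‖x‖ ^ s) (norm ⁻¹' Set.Ioo 0 r) μ ↔
      -(Module.finrank ℝ E : ℝ) < s := by
  rw [integrableOn_norm_rpow_preimage_iff μ measurableSet_Ioo Set.Ioo_subset_Ioi_self,
    intervalIntegral.integrableOn_Ioo_rpow_iff hr]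
  constructor <;> intro <;> linarith

lemma integrableOn_norm_rpow_exterior_iff {s R : ℝ} (hR : 0 < R) :
    IntegrableOn (fun x : E => ‖x‖ ^ s) (norm ⁻¹' Set.Ioi R) μ ↔
      s < -(Module.finrank ℝ E : ℝ) := by
  rw [integrableOn_norm_rpow_preimage_iff μ measurableSet_Ioi (Set.Ioi_subset_Ioi hR.le),
    integrableOn_Ioi_rpow_iff hR]
  constructor <;> intro <;> linarith

end Radial

lemma integrableOn_of_ofReal_const_mul_le {X : Type*} [MeasurableSpace X] {μ : Measure X}
    {S : Set X} {f : X → ℝ} {g : X → ℝ≥0∞} {C : ℝ} (hC : 0 < C) (hS : MeasurableSet S)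
    (hf : Measurable f) (hf₀ : ∀ x, 0 ≤ f x) (hle : ∀ x ∈ S, ENNReal.ofReal (C * f x) ≤ g x)
    (hg : ∫⁻ x in S, g x ∂μ < ∞) : IntegrableOn f S μ := by
  have h_int : IntegrableOn (fun x => C * f x) S μ := by
    refine ⟨(hf.const_mul C).aestronglyMeasurable, ?_⟩
    rw [hasFiniteIntegral_iff_ofReal (ae_of_all _ fun x => mul_nonneg hC.le (hf₀ x))]
    exact (setLIntegral_mono' hS hle).trans_lt hg
  exact (integrable_const_mul_iff hC.ne'.isUnit f).mp h_int

lemma lintegral_le_of_eventually_setLIntegral_ball_le {X : Type*} [PseudoMetricSpace X]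
    [MeasurableSpace X] {μ : Measure X} {f : X → ℝ≥0∞} {x : X} {c : ℝ≥0∞}
    (h : ∀ᶠ k : ℝ in atTop, ∫⁻ y in ball x k, f y ∂μ ≤ c) : ∫⁻ y, f y ∂μ ≤ c := by
  have h_directed : Directed (· ⊆ ·) fun i : ℕ => ball x i :=
    directed_of_isDirected_le fun i j hij => ball_subset_ball (by exact_mod_cast hij)
  rw [← setLIntegral_univ, ← iUnion_ball_nat x, setLIntegral_iUnion_of_directed f h_directed]
  refine iSup_le fun i => ?_
  obtain ⟨k, hk, hik⟩ := (h.and (eventually_ge_atTop (i : ℝ))).exists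
  exact (lintegral_mono_set (ball_subset_ball hik)).trans hk

lemma mul_setLIntegral_ball_le_lintegral_sub_mul {E : Type*} [SeminormedAddCommGroup E]
    [MeasurableSpace E] [OpensMeasurableSpace E] {μ : Measure E} {f g : E → ℝ≥0∞} {c : ℝ≥0∞}
    (hc : c ≠ ∞) {ξ : E} {k : ℝ} (hf : ∀ x ∈ ball ξ k, c ≤ f x) :
    c * ∫⁻ η in ball 0 k, g η ∂μ ≤ ∫⁻ η, f (ξ - η) * g η ∂μ := by
  rw [← lintegral_const_mul' _ _ hc]
  refine (setLIntegral_mono' measurableSet_ball fun η hη => ?_).trans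
    (setLIntegral_le_lintegral (ball 0 k) _)
  gcongr
  refine hf _ ?_
  simpa [dist_eq_norm, norm_sub_rev] using hη

lemma ofReal_rpow_mul_le {t a C : ℝ} (ht : 0 < t) (γ : ℝ) {x : ℝ≥0∞}
    (hx : x ≤ ENNReal.ofReal (C * t ^ (-a))) :
    ENNReal.ofReal (t ^ γ) * x ≤ ENNReal.ofReal (C * t ^ (γ - a)) := by
  calc ENNReal.ofReal (t ^ γ) * x
      ≤ ENNReal.ofReal (t ^ γ) * ENNReal.ofReal (C * t ^ (-a)) := by gcongr
    _ = ENNReal.ofReal (C * t ^ (γ - a)) := by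
      rw [← ENNReal.ofReal_mul (by positivity), mul_left_comm, ← Real.rpow_add ht,
        ← sub_eq_add_neg]

section Kernel

variable {n : ℕ} {α ω θ : ℝ} {h : EuclideanSpace ℝ (Fin n) → ℝ≥0∞}

lemma BehavesAtOrigin.lt_of_lintegral_lt_top [NeZero n] (ho : BehavesAtOrigin α h)
    (hfin : ∫⁻ ξ, h ξ < ∞) : α < n := by
  obtain ⟨r, c, _, hr, hc, _, hbound⟩ := ho
  have h_int : IntegrableOn (fun ξ : EuclideanSpace ℝ (Fin n) => ‖ξ‖ ^ (-α))
      (norm ⁻¹' Set.Ioo 0 r) :=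
    integrableOn_of_ofReal_const_mul_le hc (measurable_norm measurableSet_Ioo) (by fun_prop)
      (fun ξ => by positivity) (fun ξ hξ => (hbound ξ hξ.1 hξ.2).1)
      ((setLIntegral_le_lintegral _ _).trans_lt hfin)
  rw [integrableOn_norm_rpow_punctured_ball_iff volume hr, finrank_euclideanSpace_fin] at h_int
  linarith

lemma BehavesAtInfinity.lt_of_lintegral_lt_top [NeZero n] (hi : BehavesAtInfinity ω h)
    (hfin : ∫⁻ ξ, h ξ < ∞) : (n : ℝ) < ω := by
  obtain ⟨R, C, _, hR, hC, _, hbound⟩ := hi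
  have h_int : IntegrableOn (fun ξ : EuclideanSpace ℝ (Fin n) => ‖ξ‖ ^ (-ω))
      (norm ⁻¹' Set.Ioi R) :=
    integrableOn_of_ofReal_const_mul_le hC (measurable_norm measurableSet_Ioi) (by fun_prop)
      (fun ξ => by positivity) (fun ξ hξ => (hbound ξ hξ).1)
      ((setLIntegral_le_lintegral _ _).trans_lt hfin)
  rw [integrableOn_norm_rpow_exterior_iff volume hR, finrank_euclideanSpace_fin] at h_int
  linarith

lemma BehavesAtInfinity.exists_forall_mem_ball_le (hi : BehavesAtInfinity ω h) (hω : 0 ≤ ω) :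
    ∃ C > 0, ∀ᶠ k : ℝ in atTop, ∀ ξ : EuclideanSpace ℝ (Fin n), ‖ξ‖ = 2 * k →
      ∀ x ∈ ball ξ k, ENNReal.ofReal (C * k ^ (-ω)) ≤ h x := by
  obtain ⟨R, C, _, hR, hC, _, hbound⟩ := hi
  refine ⟨C * 3 ^ (-ω), by positivity, ?_⟩
  filter_upwards [eventually_gt_atTop R] with k hk ξ hξ x hx
  have hk₀ : 0 < k := hR.trans hk
  rw [mem_ball_iff_norm] at hx
  have hx_gt : k < ‖x‖ := by linarith [norm_sub_norm_le ξ x, norm_sub_rev ξ x]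
  have hx_le : ‖x‖ ≤ 3 * k := by linarith [norm_sub_norm_le x ξ]
  refine le_trans (ENNReal.ofReal_le_ofReal ?_) (hbound x (hk.trans hx_gt)).1
  rw [mul_assoc, ← Real.mul_rpow (by norm_num) hk₀.le]
  exact mul_le_mul_of_nonneg_left
    (Real.rpow_le_rpow_of_nonpos (hk₀.trans hx_gt) hx_le (by linarith)) hC.le

lemma IsMajorizingKernel.exists_setLIntegral_ball_le [NeZero n] (hker : IsMajorizingKernel θ h)
    (hi : BehavesAtInfinity ω h) (hω : 0 ≤ ω) :
    ∃ K : ℝ, ∀ᶠ k : ℝ in atTop, ∫⁻ ξ in ball 0 k, h ξ ≤ ENNReal.ofReal (K * k ^ θ) := by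
  obtain ⟨-, -, ⟨B, hB, hconv⟩, -⟩ := hker
  obtain ⟨c, hc, h_lower⟩ := hi.exists_forall_mem_ball_le hω
  obtain ⟨R, _, C, hR, _, hC, hbound⟩ := hi
  refine ⟨B * C / c * 2 ^ (θ - ω), ?_⟩
  filter_upwards [h_lower, eventually_gt_atTop R] with k hk_lower hk
  have hk₀ : 0 < k := hR.trans hk
  obtain ⟨ξ, hξ⟩ := exists_norm_eq (EuclideanSpace ℝ (Fin n)) (c := 2 * k) (by positivity)
  have hD : 0 < c * k ^ (-ω) := by positivity
  have h_const : B * (2 * k) ^ θ * (C * (2 * k) ^ (-ω)) =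
      c * k ^ (-ω) * (B * C / c * 2 ^ (θ - ω) * k ^ θ) := by
    rw [sub_eq_add_neg, Real.rpow_add two_pos, Real.mul_rpow two_pos.le hk₀.le,
      Real.mul_rpow two_pos.le hk₀.le]
    field_simp
  refine (ENNReal.mul_le_mul_iff_right (ENNReal.ofReal_pos.mpr hD).ne'
    ENNReal.ofReal_ne_top).mp ?_
  calc ENNReal.ofReal (c * k ^ (-ω)) * ∫⁻ η in ball 0 k, h η
      ≤ selfConv h ξ :=
        mul_setLIntegral_ball_le_lintegral_sub_mul ENNReal.ofReal_ne_top (hk_lower ξ hξ)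
    _ ≤ ENNReal.ofReal (B * ‖ξ‖ ^ θ) * h ξ := hconv ξ
    _ ≤ ENNReal.ofReal (B * ‖ξ‖ ^ θ) * ENNReal.ofReal (C * ‖ξ‖ ^ (-ω)) := by
        gcongr
        exact (hbound ξ (by linarith)).2
    _ = ENNReal.ofReal (c * k ^ (-ω)) *
          ENNReal.ofReal (B * C / c * 2 ^ (θ - ω) * k ^ θ) := by
        rw [← ENNReal.ofReal_mul (by positivity), hξ, h_const, ENNReal.ofReal_mul hD.le]

lemma IsMajorizingKernel.lintegral_lt_top [NeZero n] (hker : IsMajorizingKernel 0 h)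
    (hi : BehavesAtInfinity ω h) (hω : 0 ≤ ω) : ∫⁻ ξ, h ξ < ∞ := by
  obtain ⟨K, hK⟩ := hker.exists_setLIntegral_ball_le hi hω
  simp only [Real.rpow_zero, mul_one] at hK
  exact (lintegral_le_of_eventually_setLIntegral_ball_le hK).trans_lt ENNReal.ofReal_lt_top

lemma BehavesAtOrigin.exists_ofReal_rpow_mul_le (ho : BehavesAtOrigin α h) {γ : ℝ}
    (hγ : α ≤ γ) :
    ∃ r > 0, ∃ M : ℝ, ∀ ξ : EuclideanSpace ℝ (Fin n), 0 < ‖ξ‖ → ‖ξ‖ < r →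
      ENNReal.ofReal (‖ξ‖ ^ γ) * h ξ ≤ ENNReal.ofReal M := by
  obtain ⟨r, _, C, hr, _, hC, hbound⟩ := ho
  refine ⟨r, hr, C * r ^ (γ - α), fun ξ hξ hξr => ?_⟩
  refine (ofReal_rpow_mul_le hξ γ (hbound ξ hξ hξr).2).trans (ENNReal.ofReal_le_ofReal ?_)
  have := sub_nonneg.mpr hγ
  gcongr

lemma BehavesAtInfinity.exists_ofReal_rpow_mul_le (hi : BehavesAtInfinity ω h) {γ : ℝ}
    (hγ : γ ≤ ω) :
    ∃ R M : ℝ, ∀ ξ : EuclideanSpace ℝ (Fin n), R < ‖ξ‖ →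
      ENNReal.ofReal (‖ξ‖ ^ γ) * h ξ ≤ ENNReal.ofReal M := by
  obtain ⟨R, _, C, hR, _, hC, hbound⟩ := hi
  refine ⟨R, C * R ^ (γ - ω), fun ξ hξ => ?_⟩
  refine (ofReal_rpow_mul_le (hR.trans hξ) γ (hbound ξ hξ).2).trans (ENNReal.ofReal_le_ofReal ?_)
  exact mul_le_mul_of_nonneg_left
    (Real.rpow_le_rpow_of_nonpos hR hξ.le (sub_nonpos.mpr hγ)) hC.le

lemma IsRadialAlgebraicKernel.iSup_rpow_mul_lt_top (hker : IsRadialAlgebraicKernel θ α ω h)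
    {γ : ℝ} (hαγ : α ≤ γ) (hγω : γ ≤ ω) :
    (⨆ (ξ : EuclideanSpace ℝ (Fin n)) (_ : ξ ≠ 0), ENNReal.ofReal (‖ξ‖ ^ γ) * h ξ) < ∞ := by
  obtain ⟨-, hα, ho, -, hi, hbdd⟩ := hker
  obtain ⟨r, hr, M₀, h_near⟩ := ho.exists_ofReal_rpow_mul_le hαγ
  obtain ⟨R, M₁, h_far⟩ := hi.exists_ofReal_rpow_mul_le hγω
  obtain ⟨M, hM⟩ := hbdd r hr
  have h_middle : ∀ ξ : EuclideanSpace ℝ (Fin n), r ≤ ‖ξ‖ → ‖ξ‖ ≤ R →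
      ENNReal.ofReal (‖ξ‖ ^ γ) * h ξ ≤ ENNReal.ofReal (R ^ γ * M) := by
    intro ξ hrξ hξR
    have hγ : 0 ≤ γ := hα.trans hαγ
    have hR : 0 ≤ R := (norm_nonneg ξ).trans hξR
    rw [ENNReal.ofReal_mul (by positivity)]
    gcongr
    exact hM ξ hrξ
  refine (iSup₂_le fun ξ hξ => ?_).trans_lt
    (ENNReal.ofReal_lt_top (r := max M₀ (max M₁ (R ^ γ * M))))
  simp only [ENNReal.ofReal_max, le_max_iff]
  rcases lt_or_ge ‖ξ‖ r with hξr | hrξ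
  · exact .inl (h_near ξ (norm_pos_iff.mpr hξ) hξr)
  rcases lt_or_ge R ‖ξ‖ with hRξ | hξR
  · exact .inr (.inl (h_far ξ hRξ))
  · exact .inr (.inr (h_middle ξ hrξ hξR))

theorem embedding_PM_theta_zero_general [NeZero n] (hker : IsRadialAlgebraicKernel 0 α ω h) :
    α < n ∧ n < ω ∧ ∀ σ : ℝ, n - ω ≤ σ → σ ≤ n - α →
      (⨆ (ξ : EuclideanSpace ℝ (Fin n)) (_ : ξ ≠ 0),
        ENNReal.ofReal (‖ξ‖ ^ ((n : ℝ) - σ)) * h ξ) < ∞ := by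
  have ⟨hmaj, _, ho, hω, hi, _⟩ := hker
  have hfin : ∫⁻ ξ, h ξ < ∞ := hmaj.lintegral_lt_top hi hω.le
  exact ⟨ho.lt_of_lintegral_lt_top hfin, hi.lt_of_lintegral_lt_top hfin,
    fun σ hωσ hσα => hker.iSup_rpow_mul_lt_top (by linarith) (by linarith)⟩

end Kernel

/-- For `h ∈ H^0_{α,ω}(ℝⁿ)`, `n ≥ 2`, there exists `0 < σ < 1` with
`sup_{ξ ≠ 0} |ξ|^{n-σ} h(ξ) < ∞`, i.e. the embedding `F_h ↪ PM^{n-σ}`. -/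
theorem embedding_PM_theta_zero (n : ℕ) (hn : 2 ≤ n) (α ω : ℝ)
    (h : EuclideanSpace ℝ (Fin n) → ℝ≥0∞) (hker : IsRadialAlgebraicKernel 0 α ω h) :
    ∃ σ : ℝ, 0 < σ ∧ σ < 1 ∧
      (⨆ (ξ : EuclideanSpace ℝ (Fin n)) (_ : ξ ≠ 0),
        ENNReal.ofReal (‖ξ‖ ^ ((n : ℝ) - σ)) * h ξ) < ∞ := by
  have : NeZero n := ⟨by omega⟩
  obtain ⟨hα, hω, h_sup⟩ := embedding_PM_theta_zero_general hker
  have hσ : 0 < min (1 / 2) ((n : ℝ) - α) := lt_min one_half_pos (sub_pos.mpr hα)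
  exact ⟨min (1 / 2) (n - α), hσ, (min_le_left _ _).trans_lt one_half_lt_one,
    h_sup _ (by linarith) (min_le_right _ _)⟩
end

section
/- Let h ∈ H^0_{α,ω}(ℝⁿ) with ω > n. Then h ∈ L¹(ℝⁿ), i.e., ∫_{ℝⁿ} h(ξ) dξ < ∞. -/
open MeasureTheory ENNReal Filter Topology Metric

/-!
Decay with exponent `ω > n` makes `h` integrable outside a ball `|η| ≤ R`, so only the singularity
at the origin matters. Fix `ξ` with `|ξ| > 2R`. For `|η| ≤ R` the point `ξ - η` stays in the region
of algebraic decay and in a bounded set, so `h(ξ - η)` is bounded below by some `c > 0` and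
`c ∫_{|η| ≤ R} h(η) dη ≤ (h*h)(ξ)`. The kernel inequality at this single point `ξ`, where `h` is
finite, bounds the right-hand side.
-/

section Lintegral

variable {X : Type*} [MeasurableSpace X] {μ : Measure X}

theorem setLIntegral_lt_top_of_lintegral_mul_lt_top {f g : X → ℝ≥0∞} {c : ℝ≥0∞} {s : Set X}
    (hs : MeasurableSet s) (hc : c ≠ 0) (hf : ∀ x ∈ s, c ≤ f x)
    (hfg : ∫⁻ x, f x * g x ∂μ < ∞) : ∫⁻ x in s, g x ∂μ < ∞ := by
  have hmul : c * ∫⁻ x in s, g x ∂μ < ∞ :=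
    calc c * ∫⁻ x in s, g x ∂μ
        ≤ ∫⁻ x in s, c * g x ∂μ := lintegral_const_mul_le _ _
      _ ≤ ∫⁻ x in s, f x * g x ∂μ := setLIntegral_mono' hs fun x hx ↦ by gcongr; exact hf x hx
      _ ≤ ∫⁻ x, f x * g x ∂μ := setLIntegral_le_lintegral _ _
      _ < ∞ := hfg
  exact ENNReal.lt_top_of_mul_ne_top_right hmul.ne hc

end Lintegral

section SeminormedAddCommGroup

variable {E : Type*} [SeminormedAddCommGroup E]

theorem ofReal_mul_rpow_le_of_mem_closedBall {f : E → ℝ≥0∞} {C R ω : ℝ} (hC : 0 ≤ C)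
    (hω : 0 ≤ ω) (hf : ∀ x, R < ‖x‖ → ENNReal.ofReal (C * ‖x‖ ^ (-ω)) ≤ f x)
    {x y : E} (hx : 2 * R < ‖x‖) (hy : y ∈ closedBall x R) :
    ENNReal.ofReal (C * (‖x‖ + R) ^ (-ω)) ≤ f y := by
  have hxy : ‖y - x‖ ≤ R := mem_closedBall_iff_norm.mp hy
  have hR : 0 ≤ R := (norm_nonneg _).trans hxy
  have hlower : R < ‖y‖ := by linarith [norm_sub_norm_le x y, norm_sub_rev x y]
  have hupper : ‖y‖ ≤ ‖x‖ + R := by linarith [norm_sub_norm_le y x]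
  calc ENNReal.ofReal (C * (‖x‖ + R) ^ (-ω))
      ≤ ENNReal.ofReal (C * ‖y‖ ^ (-ω)) := by
        gcongr ENNReal.ofReal (C * ?_)
        exact Real.rpow_le_rpow_of_nonpos (hR.trans_lt hlower) hupper (neg_nonpos.mpr hω)
    _ ≤ f y := hf y hlower

theorem setLIntegral_closedBall_lt_top_of_lintegral_sub_mul_lt_top
    [MeasurableSpace E] [OpensMeasurableSpace E] {μ : Measure E} {f g : E → ℝ≥0∞} {c : ℝ≥0∞}
    {r : ℝ} {x : E} (hc : c ≠ 0) (hf : ∀ y ∈ closedBall x r, c ≤ f y)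
    (hfg : ∫⁻ y, f (x - y) * g y ∂μ < ∞) : ∫⁻ y in closedBall 0 r, g y ∂μ < ∞ :=
  setLIntegral_lt_top_of_lintegral_mul_lt_top measurableSet_closedBall hc
    (fun y hy ↦ hf (x - y) (by simpa using hy)) hfg

end SeminormedAddCommGroup

section FiniteDimensional

variable {E : Type*} [NormedAddCommGroup E] [NormedSpace ℝ E] [FiniteDimensional ℝ E]
  [MeasurableSpace E] [BorelSpace E] {μ : Measure E} [μ.IsAddHaarMeasure]
  {f : E → ℝ≥0∞} {C C₁ C₂ R ω : ℝ}

theorem setLIntegral_compl_closedBall_rpow_norm_lt_top (hR : 0 < R)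
    (hω : (Module.finrank ℝ E : ℝ) < ω) :
    ∫⁻ x in (closedBall (0 : E) R)ᶜ, ENNReal.ofReal (‖x‖ ^ (-ω)) ∂μ < ∞ := by
  have hω₀ : 0 ≤ ω := (Nat.cast_nonneg _).trans hω.le
  set a : ℝ := R / (1 + R)
  have ha : 0 < a := by positivity
  have hle : ∀ x ∈ (closedBall (0 : E) R)ᶜ,
      ENNReal.ofReal (‖x‖ ^ (-ω)) ≤
        ENNReal.ofReal (a ^ (-ω)) * ENNReal.ofReal ((1 + ‖x‖) ^ (-ω)) := by
    intro x hx
    have hRx : R < ‖x‖ := by simpa using hx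
    have hax : a * (1 + ‖x‖) ≤ ‖x‖ := by
      rw [div_mul_eq_mul_div, div_le_iff₀ (by positivity)]
      linarith
    rw [← ENNReal.ofReal_mul (by positivity), ← Real.mul_rpow ha.le (by positivity)]
    exact ENNReal.ofReal_le_ofReal
      (Real.rpow_le_rpow_of_nonpos (by positivity) hax (neg_nonpos.mpr hω₀))
  calc ∫⁻ x in (closedBall (0 : E) R)ᶜ, ENNReal.ofReal (‖x‖ ^ (-ω)) ∂μ
      ≤ ∫⁻ x in (closedBall (0 : E) R)ᶜ,
          ENNReal.ofReal (a ^ (-ω)) * ENNReal.ofReal ((1 + ‖x‖) ^ (-ω)) ∂μ :=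
        setLIntegral_mono' measurableSet_closedBall.compl hle
    _ ≤ ∫⁻ x, ENNReal.ofReal (a ^ (-ω)) * ENNReal.ofReal ((1 + ‖x‖) ^ (-ω)) ∂μ :=
        setLIntegral_le_lintegral _ _
    _ = ENNReal.ofReal (a ^ (-ω)) * ∫⁻ x, ENNReal.ofReal ((1 + ‖x‖) ^ (-ω)) ∂μ :=
        lintegral_const_mul' _ _ ofReal_ne_top
    _ < ∞ := mul_lt_top ofReal_lt_top (finite_integral_one_add_norm hω)

theorem setLIntegral_compl_closedBall_lt_top_of_le_rpow_norm (hR : 0 < R)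
    (hω : (Module.finrank ℝ E : ℝ) < ω)
    (hf : ∀ x, R < ‖x‖ → f x ≤ ENNReal.ofReal (C * ‖x‖ ^ (-ω))) :
    ∫⁻ x in (closedBall 0 R)ᶜ, f x ∂μ < ∞ :=
  calc ∫⁻ x in (closedBall 0 R)ᶜ, f x ∂μ
      ≤ ∫⁻ x in (closedBall 0 R)ᶜ, ENNReal.ofReal C * ENNReal.ofReal (‖x‖ ^ (-ω)) ∂μ :=
        setLIntegral_mono' measurableSet_closedBall.compl fun x hx ↦ by
          rw [← ENNReal.ofReal_mul' (by positivity)]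
          exact hf x (by simpa using hx)
    _ = ENNReal.ofReal C * ∫⁻ x in (closedBall 0 R)ᶜ, ENNReal.ofReal (‖x‖ ^ (-ω)) ∂μ :=
        lintegral_const_mul' _ _ ofReal_ne_top
    _ < ∞ := mul_lt_top ofReal_lt_top (setLIntegral_compl_closedBall_rpow_norm_lt_top hR hω)

theorem lintegral_lt_top_of_lintegral_sub_mul_self_lt_top (hR : 0 < R) (hC₁ : 0 < C₁)
    (hω : (Module.finrank ℝ E : ℝ) < ω)
    (hlower : ∀ x, R < ‖x‖ → ENNReal.ofReal (C₁ * ‖x‖ ^ (-ω)) ≤ f x)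
    (hupper : ∀ x, R < ‖x‖ → f x ≤ ENNReal.ofReal (C₂ * ‖x‖ ^ (-ω)))
    {x : E} (hx : 2 * R < ‖x‖) (hconv : ∫⁻ y, f (x - y) * f y ∂μ < ∞) :
    ∫⁻ y, f y ∂μ < ∞ := by
  have hω₀ : 0 ≤ ω := (Nat.cast_nonneg _).trans hω.le
  have hc : ENNReal.ofReal (C₁ * (‖x‖ + R) ^ (-ω)) ≠ 0 :=
    (ofReal_pos.mpr (by positivity)).ne'
  have hball : ∫⁻ y in closedBall 0 R, f y ∂μ < ∞ :=
    setLIntegral_closedBall_lt_top_of_lintegral_sub_mul_lt_top hc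
      (fun _ ↦ ofReal_mul_rpow_le_of_mem_closedBall hC₁.le hω₀ hlower hx) hconv
  have htail : ∫⁻ y in (closedBall 0 R)ᶜ, f y ∂μ < ∞ :=
    setLIntegral_compl_closedBall_lt_top_of_le_rpow_norm hR hω hupper
  rw [← lintegral_add_compl f (measurableSet_closedBall (x := (0 : E)) (ε := R))]
  exact add_lt_top.mpr ⟨hball, htail⟩

end FiniteDimensional

section Kernel

variable {n : ℕ} {θ ω : ℝ} {h : EuclideanSpace ℝ (Fin n) → ℝ≥0∞}

theorem IsMajorizingKernel.selfConv_lt_top (hker : IsMajorizingKernel θ h)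
    {ξ : EuclideanSpace ℝ (Fin n)} (hξ : h ξ < ∞) : selfConv h ξ < ∞ := by
  obtain ⟨-, -, ⟨B, -, hB⟩, -⟩ := hker
  exact (hB ξ).trans_lt (mul_lt_top ofReal_lt_top hξ)

theorem mem_L1_of_omega_gt_general (hn : 1 ≤ n) (hω : (n : ℝ) < ω)
    (hker : IsMajorizingKernel θ h) (hinf : BehavesAtInfinity ω h) :
    (∫⁻ ξ : EuclideanSpace ℝ (Fin n), h ξ) < ∞ := by
  obtain ⟨R, C₁, C₂, hR, hC₁, -, hbounds⟩ := hinf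
  have : Nonempty (Fin n) := ⟨⟨0, hn⟩⟩
  obtain ⟨ξ, hξ⟩ := NormedSpace.exists_lt_norm ℝ (EuclideanSpace ℝ (Fin n)) (2 * R)
  have hfin : h ξ < ∞ := (hbounds ξ (by linarith)).2.trans_lt ofReal_lt_top
  exact lintegral_lt_top_of_lintegral_sub_mul_self_lt_top hR hC₁ (by simpa using hω)
    (fun η hη ↦ (hbounds η hη).1) (fun η hη ↦ (hbounds η hη).2) hξ
    (hker.selfConv_lt_top hfin)

end Kernel

/-- For `h ∈ H^0_{α,ω}(ℝⁿ)` with `ω > n`, the kernel `h` is integrable: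
`∫ h(ξ) dξ < ∞`. -/
theorem mem_L1_of_omega_gt (n : ℕ) (hn : 1 ≤ n) (α ω : ℝ) (hω : (n : ℝ) < ω)
    (h : EuclideanSpace ℝ (Fin n) → ℝ≥0∞) (hker : IsRadialAlgebraicKernel 0 α ω h) :
    (∫⁻ ξ : EuclideanSpace ℝ (Fin n), h ξ) < ∞ := by
  obtain ⟨hmaj, -, -, -, hinf, -⟩ := hker
  exact mem_L1_of_omega_gt_general hn hω hmaj hinf
end
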